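/- Let δ ∈ ℂ with Re(δ) ≥ 0 and δ ≠ 0, and let r be a natural number. Set m = ⌊Re(δ)⌋ + 1 and g = P^m[x ↦ x^δ · {x}^r]. Then ((δ+1)/δ)·(P[g](X) − g(X)/(δ+1)) → 0 as X → ∞. (This is the continuous form of Theorem 1: X^δ α^r Cesàro-converges to 0 via the regular polynomial ((δ+1)/δ)(P − 1/(δ+1))·P^{⌊Re(δ)⌋+1}.) -/

import Mathlib

/-!
Write `c = ∫₀¹ {t}^r dt` and `φ(x) = {x}^r - c`, a bounded right-continuous `1`-periodic function of
mean zero, so that `x^δ {x}^r = c x^δ + x^δ φ(x)`. The first summand is an eigenfunction of the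
averaging operator `P` with eigenvalue `1/(δ+1)`, so `P - 1/(δ+1)` kills everything that `P^m` makes
of it. It remains to see that `P^m[x^δ φ] → 0` as soon as `m > Re δ` (`vanishes_cpow_mul`); then
`P^(m+1)[x^δ φ] → 0` as well, because averaging preserves convergence to `0` (`tendsto_cesaro`).

The latter is proved by induction on `m`. If `Φ` is a primitive of `φ`, integration by parts gives
`P[x^δ φ] = x^(δ-1) Φ - δ P[x^(δ-1) Φ]` (`cesaro_by_parts`), so it suffices that
`P^(m-1)[x^(δ-1) Φ] → 0`. If `Re δ ≥ 1`, choose `Φ` of mean zero and use the induction hypothesis for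
the exponent `δ - 1`. If `Re δ < 1`, choose `Φ` with `Φ(0) = 0`: then `x^(δ-1) Φ` is bounded near `0`
and itself tends to `0`.
-/

open Filter

/-- The Cesàro averaging operator `P[f](x) = (1/x) ∫₀^x f(t) dt`. -/
noncomputable def cesaro (f : ℝ → ℂ) : ℝ → ℂ :=
  fun x => (x : ℂ)⁻¹ * ∫ t in (0:ℝ)..x, f t

section

open MeasureTheory Set

/-! ### Averaging of locally bounded functions -/

/-- The functions on `(0, ∞)` on which averaging is well behaved: measurable, and bounded on every
interval `(0, X]`. Unlike integrability on `(0, X]`, this property is inherited by `cesaro f`. -/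
def LocBdd (f : ℝ → ℂ) : Prop :=
  AEStronglyMeasurable f (volume.restrict (Ioi 0)) ∧
    ∀ X : ℝ, ∃ C : ℝ, ∀ t, 0 < t → t ≤ X → ‖f t‖ ≤ C

/-- `f` is `LocBdd` and its `k`-th iterated average tends to `0`. -/
def Vanishes (k : ℕ) (f : ℝ → ℂ) : Prop :=
  LocBdd f ∧ Tendsto (cesaro^[k] f) atTop (nhds 0)

/-- Bounded measurable right-continuous `1`-periodic functions of mean zero. -/
structure PeriodicMeanZero (φ : ℝ → ℂ) : Prop where
  periodic : Function.Periodic φ 1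
  right_cont : ∀ x, ContinuousWithinAt φ (Ioi x) x
  bdd : ∃ C : ℝ, ∀ x, ‖φ x‖ ≤ C
  meas : Measurable φ
  mean : ∫ t in (0:ℝ)..1, φ t = 0

lemma LocBdd.intervalIntegrable {f : ℝ → ℂ} (hf : LocBdd f) {a b : ℝ} (ha : 0 ≤ a) (hb : 0 ≤ b) :
    IntervalIntegrable f volume a b := by
  have key : ∀ x : ℝ, 0 ≤ x → IntervalIntegrable f volume 0 x := by
    intro x hx
    obtain ⟨C, hC⟩ := hf.2 x
    rw [intervalIntegrable_iff_integrableOn_Ioc_of_le hx]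
    have : IsFiniteMeasure (volume.restrict (Ioc 0 x)) := ⟨by simp⟩
    refine Integrable.of_bound
      (hf.1.mono_measure (Measure.restrict_mono Ioc_subset_Ioi_self le_rfl)) C ?_
    filter_upwards [ae_restrict_mem measurableSet_Ioc] with t ht
    exact hC t ht.1 ht.2
  exact (key a ha).symm.trans (key b hb)

lemma LocBdd.add {f g : ℝ → ℂ} (hf : LocBdd f) (hg : LocBdd g) :
    LocBdd (fun x => f x + g x) := by
  refine ⟨hf.1.add hg.1, fun X => ?_⟩
  obtain ⟨C, hC⟩ := hf.2 X
  obtain ⟨D, hD⟩ := hg.2 X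
  exact ⟨C + D, fun t h0 h1 => (norm_add_le _ _).trans (add_le_add (hC t h0 h1) (hD t h0 h1))⟩

lemma LocBdd.const_mul {f : ℝ → ℂ} (hf : LocBdd f) (c : ℂ) : LocBdd (fun x => c * f x) := by
  refine ⟨hf.1.const_mul c, fun X => ?_⟩
  obtain ⟨C, hC⟩ := hf.2 X
  exact ⟨‖c‖ * C, fun t h0 h1 => by
    rw [norm_mul]; exact mul_le_mul_of_nonneg_left (hC t h0 h1) (norm_nonneg _)⟩

lemma LocBdd.cesaro {f : ℝ → ℂ} (hf : LocBdd f) : LocBdd (cesaro f) := by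
  constructor
  · have hc : ContinuousOn (fun x : ℝ => ∫ t in (0:ℝ)..x, f t) (Ioi 0) := by
      intro x hx
      have hx : 0 < x := hx
      have h1 : ContinuousOn (fun x : ℝ => ∫ t in (0:ℝ)..x, f t) (uIcc 0 (x + 1)) :=
        intervalIntegral.continuousOn_primitive_interval'
          (hf.intervalIntegrable le_rfl (by linarith)) (by simp)
      rw [uIcc_of_le (by linarith)] at h1
      exact ((h1 x ⟨hx.le, by linarith⟩).continuousAt
        (Icc_mem_nhds hx (by linarith))).continuousWithinAt
    refine ContinuousOn.aestronglyMeasurable (ContinuousOn.mul ?_ hc) measurableSet_Ioi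
    exact ContinuousOn.inv₀ (by fun_prop) fun x hx => by
      exact_mod_cast (ne_of_gt hx : x ≠ 0)
  · intro X
    obtain ⟨C, hC⟩ := hf.2 X
    refine ⟨C, fun x h0 h1 => ?_⟩
    have : ‖∫ t in (0:ℝ)..x, f t‖ ≤ C * |x - 0| := by
      refine intervalIntegral.norm_integral_le_of_norm_le_const fun t ht => ?_
      rw [uIoc_of_le h0.le] at ht
      exact hC t ht.1 (ht.2.trans h1)
    rw [sub_zero, abs_of_pos h0] at this
    simp only [_root_.cesaro, norm_mul, norm_inv, Complex.norm_real, Real.norm_eq_abs, abs_of_pos h0]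
    rw [inv_mul_le_iff₀ h0]
    linarith

lemma LocBdd.iterate {f : ℝ → ℂ} (hf : LocBdd f) (k : ℕ) : LocBdd (_root_.cesaro^[k] f) := by
  induction k with
  | zero => exact hf
  | succ k ih => rw [Function.iterate_succ_apply']; exact ih.cesaro

lemma cesaro_congr {f g : ℝ → ℂ} (h : ∀ x, 0 < x → f x = g x) (x : ℝ) (hx : 0 < x) :
    cesaro f x = cesaro g x := by
  simp only [cesaro]
  congr 1
  refine intervalIntegral.integral_congr_ae (Eventually.of_forall fun t ht => ?_)
  rw [uIoc_of_le hx.le] at ht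
  exact h t ht.1

lemma iterate_congr (k : ℕ) {f g : ℝ → ℂ} (h : ∀ x, 0 < x → f x = g x) :
    ∀ x, 0 < x → cesaro^[k] f x = cesaro^[k] g x := by
  induction k with
  | zero => exact h
  | succ k ih =>
    intro x hx
    simp only [Function.iterate_succ_apply']
    exact cesaro_congr ih x hx

lemma cesaro_add_mul {f g : ℝ → ℂ} (hf : LocBdd f) (hg : LocBdd g) (c : ℂ) (x : ℝ) (hx : 0 < x) :
    cesaro (fun t => f t + c * g t) x = cesaro f x + c * cesaro g x := by
  simp only [cesaro]
  rw [intervalIntegral.integral_add (hf.intervalIntegrable le_rfl hx.le)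
    ((hg.const_mul c).intervalIntegrable le_rfl hx.le), intervalIntegral.integral_const_mul]
  ring

lemma iterate_add_mul {f g : ℝ → ℂ} (hf : LocBdd f) (hg : LocBdd g) (c : ℂ) (k : ℕ) :
    ∀ x, 0 < x →
      cesaro^[k] (fun t => f t + c * g t) x = cesaro^[k] f x + c * cesaro^[k] g x := by
  induction k with
  | zero => intro x _; rfl
  | succ k ih =>
    intro x hx
    simp only [Function.iterate_succ_apply']
    rw [cesaro_congr ih x hx, cesaro_add_mul (hf.iterate k) (hg.iterate k) c x hx]

/-- Averaging preserves convergence to `0` at infinity. -/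
lemma tendsto_cesaro {f : ℝ → ℂ} (hf : LocBdd f) (h : Tendsto f atTop (nhds 0)) :
    Tendsto (cesaro f) atTop (nhds 0) := by
  rw [Metric.tendsto_atTop] at h ⊢
  intro ε hε
  obtain ⟨A₀, hA₀⟩ := h (ε / 2) (by positivity)
  set A := max A₀ 1
  have hA : 0 < A := lt_of_lt_of_le one_pos (le_max_right _ _)
  obtain ⟨C, hC⟩ := hf.2 A
  have hC0 : 0 ≤ C := (norm_nonneg _).trans (hC A hA le_rfl)
  -- beyond this point the contribution `C * A` of `(0, A]` is less than `ε / 2 * x`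
  refine ⟨A + 2 * (C * A) / ε, fun x hx => ?_⟩
  have hq : 0 ≤ 2 * (C * A) / ε := by positivity
  have hAx : A ≤ x := by linarith
  have hx0 : 0 < x := by linarith
  have h1 : ‖∫ t in (0:ℝ)..A, f t‖ ≤ C * |A - 0| :=
    intervalIntegral.norm_integral_le_of_norm_le_const fun t ht => by
      rw [uIoc_of_le hA.le] at ht
      exact hC t ht.1 ht.2
  have h2 : ‖∫ t in A..x, f t‖ ≤ ε / 2 * |x - A| :=
    intervalIntegral.norm_integral_le_of_norm_le_const fun t ht => by
      rw [uIoc_of_le hAx] at ht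
      have := hA₀ t ((le_max_left _ _).trans ht.1.le)
      rw [dist_zero_right] at this
      exact this.le
  rw [sub_zero, abs_of_pos hA] at h1
  rw [abs_of_nonneg (by linarith)] at h2
  have h3 := intervalIntegral.integral_add_adjacent_intervals
    (hf.intervalIntegrable le_rfl hA.le) (hf.intervalIntegrable hA.le hx0.le)
  have h4 : C * A < ε / 2 * x := by
    have : 2 * (C * A) / ε < x := by linarith
    rw [div_lt_iff₀ hε] at this
    linarith
  rw [dist_zero_right]
  simp only [cesaro, norm_mul, norm_inv, Complex.norm_real, Real.norm_eq_abs, abs_of_pos hx0]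
  rw [inv_mul_lt_iff₀ hx0, ← h3]
  refine (norm_add_le _ _).trans_lt ?_
  nlinarith

lemma Vanishes.succ {k : ℕ} {f : ℝ → ℂ} (h : Vanishes k f) : Vanishes (k + 1) f := by
  refine ⟨h.1, ?_⟩
  rw [Function.iterate_succ_apply']
  exact tendsto_cesaro (h.1.iterate k) h.2

lemma Vanishes.of_zero {f : ℝ → ℂ} (h : Vanishes 0 f) (k : ℕ) : Vanishes k f := by
  induction k with
  | zero => exact h
  | succ k ih => exact ih.succ

/-! ### Integration by parts -/

lemma locBdd_of_measurable {f : ℝ → ℂ} (hf : Measurable f)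
    (h : ∀ X : ℝ, ∃ C : ℝ, ∀ t, 0 < t → t ≤ X → ‖f t‖ ≤ C) : LocBdd f :=
  ⟨hf.aestronglyMeasurable, h⟩

lemma measurable_cpow_mul (δ : ℂ) {φ : ℝ → ℂ} (hφ : Measurable φ) :
    Measurable (fun x : ℝ => (x : ℂ) ^ δ * φ x) := by
  fun_prop

lemma locBdd_cpow_mul {δ : ℂ} (hre : 0 ≤ δ.re) {φ : ℝ → ℂ} (hφ : Measurable φ)
    (hb : ∃ C : ℝ, ∀ x, ‖φ x‖ ≤ C) : LocBdd (fun x : ℝ => (x : ℂ) ^ δ * φ x) := by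
  obtain ⟨C, hC⟩ := hb
  refine locBdd_of_measurable (measurable_cpow_mul δ hφ) fun X => ⟨X ^ δ.re * C, fun t h0 h1 => ?_⟩
  rw [norm_mul, Complex.norm_cpow_eq_rpow_re_of_pos h0]
  exact mul_le_mul (Real.rpow_le_rpow h0.le h1 hre) (hC t) (norm_nonneg _)
    (Real.rpow_nonneg (h0.le.trans h1) _)

/-- Integration by parts for averages. Local boundedness of `x^(δ-1) Φ` makes the boundary term at
`0` vanish, which covers `Re δ = 0` and `δ = 0` too. -/
lemma cesaro_by_parts {δ : ℂ} {φ Φ : ℝ → ℂ} (hc : Continuous Φ)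
    (hd : ∀ x, HasDerivWithinAt Φ (φ x) (Ioi x) x)
    (hu : LocBdd (fun x : ℝ => (x : ℂ) ^ δ * φ x))
    (hw : LocBdd (fun x : ℝ => (x : ℂ) ^ (δ - 1) * Φ x)) (x : ℝ) (hx : 0 < x) :
    cesaro (fun x : ℝ => (x : ℂ) ^ δ * φ x) x =
      (x : ℂ) ^ (δ - 1) * Φ x + (-δ) * cesaro (fun x : ℝ => (x : ℂ) ^ (δ - 1) * Φ x) x := by
  -- equals `t^δ Φ(t)` for `t > 0`, and `0` at `t = 0` whatever `δ` is
  set F : ℝ → ℂ := fun t => (t : ℂ) * ((t : ℂ) ^ (δ - 1) * Φ t) with hF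
  have hFt : ∀ t : ℝ, 0 < t → F t = (t : ℂ) ^ δ * Φ t := by
    intro t ht
    have ht' : (t : ℂ) ≠ 0 := by exact_mod_cast ht.ne'
    simp only [hF]
    rw [Complex.cpow_sub _ _ ht', Complex.cpow_one]
    field_simp
  have hpow : ∀ t : ℝ, 0 < t →
      HasDerivAt (fun y : ℝ => (y : ℂ) ^ δ) (δ * (t : ℂ) ^ (δ - 1)) t := by
    intro t ht
    have h := (HasDerivAt.cpow_const (c := δ) (hasDerivAt_id (t : ℂ))
      (by simp [Complex.slitPlane, ht])).comp_ofReal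
    simpa using h
  have hcont : ContinuousOn F (Icc 0 x) := by
    intro t ht
    rcases ht.1.eq_or_lt with h0 | h0
    · subst h0
      obtain ⟨C, hC⟩ := hw.2 x
      have hF0 : F 0 = 0 := by simp [hF]
      rw [ContinuousWithinAt, hF0]
      refine squeeze_zero_norm' (a := fun t : ℝ => t * C) ?_ ?_
      · filter_upwards [self_mem_nhdsWithin] with s hs
        rcases hs.1.eq_or_lt with h0 | h0
        · subst h0; simp [hF]
        · simp only [hF]
          rw [norm_mul, Complex.norm_real, Real.norm_eq_abs, abs_of_pos h0]
          exact mul_le_mul_of_nonneg_left (hC s h0 hs.2) h0.le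
      · have : Continuous (fun t : ℝ => t * C) := by fun_prop
        simpa using (this.tendsto 0).mono_left (nhdsWithin_le_nhds (s := Icc 0 x))
    · refine ContinuousAt.continuousWithinAt ?_
      refine ((hpow t h0).continuousAt.mul hc.continuousAt).congr ?_
      filter_upwards [lt_mem_nhds h0] with s hs
      exact (hFt s hs).symm
  have hderiv : ∀ t ∈ Ioo 0 x, HasDerivWithinAt F
      ((t : ℂ) ^ δ * φ t + δ * ((t : ℂ) ^ (δ - 1) * Φ t)) (Ioi t) t := by
    intro t ht
    have h := ((hpow t ht.1).hasDerivWithinAt (s := Ioi t)).mul (hd t)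
    have h' : HasDerivWithinAt F (δ * (t : ℂ) ^ (δ - 1) * Φ t + (t : ℂ) ^ δ * φ t) (Ioi t) t := by
      refine h.congr (fun s hs => ?_) ?_
      · exact hFt s (ht.1.trans hs)
      · exact hFt t ht.1
    convert h' using 1
    ring
  have hint := intervalIntegral.integral_eq_sub_of_hasDeriv_right_of_le hx.le hcont hderiv
    ((hu.add (hw.const_mul δ)).intervalIntegrable le_rfl hx.le)
  rw [intervalIntegral.integral_add (hu.intervalIntegrable le_rfl hx.le)
    ((hw.const_mul δ).intervalIntegrable le_rfl hx.le),
    intervalIntegral.integral_const_mul] at hint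
  have hF0 : F 0 = 0 := by simp [hF]
  rw [hF0, sub_zero] at hint
  have hx' : (x : ℂ) ≠ 0 := by exact_mod_cast hx.ne'
  simp only [cesaro]
  rw [eq_sub_of_add_eq hint]
  simp only [hF]
  field_simp
  ring

/-! ### Primitives of periodic functions of mean zero -/

lemma PeriodicMeanZero.intervalIntegrable {φ : ℝ → ℂ} (h : PeriodicMeanZero φ) (a b : ℝ) :
    IntervalIntegrable φ volume a b := by
  obtain ⟨C, hC⟩ := h.bdd
  rw [intervalIntegrable_iff]
  exact Measure.integrableOn_of_bounded (M := C) (by simp [uIoc])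
    h.meas.aestronglyMeasurable (Eventually.of_forall hC)

lemma PeriodicMeanZero.hasDeriv_primitive {φ : ℝ → ℂ} (h : PeriodicMeanZero φ) (c : ℂ) (x : ℝ) :
    HasDerivWithinAt (fun x : ℝ => c + ∫ t in (0:ℝ)..x, φ t) (φ x) (Ioi x) x :=
  ((intervalIntegral.integral_hasDerivWithinAt_right (h.intervalIntegrable 0 x)
    (s := Ici x) (t := Ioi x)
    (h.meas.stronglyMeasurable.stronglyMeasurableAtFilter) (h.right_cont x)).mono
      Ioi_subset_Ici_self).const_add c

lemma PeriodicMeanZero.continuous_primitive {φ : ℝ → ℂ} (h : PeriodicMeanZero φ) (c : ℂ) :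
    Continuous (fun x : ℝ => c + ∫ t in (0:ℝ)..x, φ t) :=
  continuous_const.add (intervalIntegral.continuous_primitive h.intervalIntegrable 0)

lemma PeriodicMeanZero.periodic_primitive {φ : ℝ → ℂ} (h : PeriodicMeanZero φ) (c : ℂ) :
    Function.Periodic (fun x : ℝ => c + ∫ t in (0:ℝ)..x, φ t) 1 := by
  intro x
  have h1 := intervalIntegral.integral_add_adjacent_intervals
    (h.intervalIntegrable 0 x) (h.intervalIntegrable x (x + 1))
  have h2 := h.periodic.intervalIntegral_add_eq x 0
  rw [zero_add, h.mean] at h2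
  rw [h2, add_zero] at h1
  simp only [h1]

lemma PeriodicMeanZero.bdd_primitive {φ : ℝ → ℂ} (h : PeriodicMeanZero φ) (c : ℂ) :
    ∃ C : ℝ, ∀ x : ℝ, ‖c + ∫ t in (0:ℝ)..x, φ t‖ ≤ C := by
  obtain ⟨C, hC⟩ := (isCompact_Icc (a := (0:ℝ)) (b := 1)).exists_bound_of_continuousOn
    (h.continuous_primitive c).continuousOn
  refine ⟨C, fun x => ?_⟩
  obtain ⟨y, hy, hxy⟩ := (h.periodic_primitive c).exists_mem_Ico₀ one_pos x
  rw [hxy]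
  exact hC y ⟨hy.1, hy.2.le⟩

/-- Some primitive again has mean zero, which allows integration by parts to be repeated. -/
lemma PeriodicMeanZero.exists_primitive {φ : ℝ → ℂ} (h : PeriodicMeanZero φ) :
    ∃ c : ℂ, PeriodicMeanZero (fun x : ℝ => c + ∫ t in (0:ℝ)..x, φ t) := by
  refine ⟨-∫ x in (0:ℝ)..1, ∫ t in (0:ℝ)..x, φ t, h.periodic_primitive _,
    fun x => (h.continuous_primitive _).continuousWithinAt, h.bdd_primitive _,
    (h.continuous_primitive _).measurable, ?_⟩
  have hc := intervalIntegral.continuous_primitive h.intervalIntegrable 0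
  rw [intervalIntegral.integral_add (by simp) (hc.intervalIntegrable 0 1)]
  simp

/-! ### Decay of the oscillating term -/

/-- The induction step: by integration by parts, one averaging lowers the exponent by one. -/
lemma vanishes_step {δ : ℂ} {φ Φ : ℝ → ℂ} {k : ℕ} (hc : Continuous Φ)
    (hd : ∀ x, HasDerivWithinAt Φ (φ x) (Ioi x) x)
    (hu : LocBdd (fun x : ℝ => (x : ℂ) ^ δ * φ x))
    (hw : Vanishes k (fun x : ℝ => (x : ℂ) ^ (δ - 1) * Φ x)) :
    Vanishes (k + 1) (fun x : ℝ => (x : ℂ) ^ δ * φ x) := by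
  refine ⟨hu, ?_⟩
  have h2 := hw.succ.2
  rw [Function.iterate_succ_apply] at h2 ⊢
  have h3 := hw.2.add (h2.const_mul (-δ))
  rw [mul_zero, add_zero] at h3
  refine h3.congr' ?_
  filter_upwards [eventually_gt_atTop 0] with x hx
  rw [iterate_congr k (cesaro_by_parts hc hd hu hw.1) x hx,
    iterate_add_mul hw.1 hw.1.cesaro (-δ) k x hx]

/-- When `0 ≤ Re δ < 1`, the primitive `Φ` with `Φ 0 = 0` makes `x^(δ-1) Φ` bounded near `0`, and it
tends to `0` at infinity because `Φ` is bounded. -/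
lemma vanishes_base (k : ℕ) {δ : ℂ} {φ : ℝ → ℂ} (h0 : 0 ≤ δ.re) (h1 : δ.re < 1)
    (hφ : PeriodicMeanZero φ) : Vanishes (k + 1) (fun x : ℝ => (x : ℂ) ^ δ * φ x) := by
  refine vanishes_step (hφ.continuous_primitive 0) (hφ.hasDeriv_primitive 0)
    (locBdd_cpow_mul h0 hφ.meas hφ.bdd) (Vanishes.of_zero ⟨?_, ?_⟩ k)
  · obtain ⟨C, hC⟩ := hφ.bdd
    have hC0 : 0 ≤ C := (norm_nonneg _).trans (hC 0)
    refine locBdd_of_measurable (measurable_cpow_mul _ (hφ.continuous_primitive 0).measurable)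
      fun X => ⟨C * X ^ δ.re, fun t ht htX => ?_⟩
    have hΦ : ‖∫ s in (0:ℝ)..t, φ s‖ ≤ C * |t - 0| :=
      intervalIntegral.norm_integral_le_of_norm_le_const fun s _ => hC s
    rw [sub_zero, abs_of_pos ht] at hΦ
    rw [zero_add, norm_mul, Complex.norm_cpow_eq_rpow_re_of_pos ht, Complex.sub_re, Complex.one_re]
    calc t ^ (δ.re - 1) * ‖∫ s in (0:ℝ)..t, φ s‖ ≤ t ^ (δ.re - 1) * (C * t) :=
          mul_le_mul_of_nonneg_left hΦ (Real.rpow_nonneg ht.le _)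
      _ = C * t ^ δ.re := by
          rw [Real.rpow_sub_one ht.ne']
          field_simp
      _ ≤ C * X ^ δ.re := mul_le_mul_of_nonneg_left (Real.rpow_le_rpow ht.le htX h0) hC0
  · obtain ⟨C, hC⟩ := hφ.bdd_primitive 0
    have hlim : Tendsto (fun x : ℝ => x ^ (-(1 - δ.re)) * C) atTop (nhds 0) := by
      simpa using (tendsto_rpow_neg_atTop (y := 1 - δ.re) (by linarith)).mul_const C
    refine squeeze_zero_norm' ?_ hlim
    filter_upwards [eventually_gt_atTop 0] with x hx
    rw [Function.iterate_zero, id, norm_mul, Complex.norm_cpow_eq_rpow_re_of_pos hx, neg_sub,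
      Complex.sub_re, Complex.one_re]
    exact mul_le_mul_of_nonneg_left (hC x) (Real.rpow_nonneg hx.le _)

/-- More than `Re δ` averagings send an oscillating term `x^δ φ` to `0` at infinity. -/
lemma vanishes_cpow_mul (k : ℕ) : ∀ (δ : ℂ) (φ : ℝ → ℂ), 0 ≤ δ.re → δ.re < k + 1 →
    PeriodicMeanZero φ → Vanishes (k + 1) (fun x : ℝ => (x : ℂ) ^ δ * φ x) := by
  induction k with
  | zero =>
    intro δ φ h0 h1 hφ
    exact vanishes_base 0 h0 (by simpa using h1) hφ
  | succ j ih =>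
    intro δ φ h0 h1 hφ
    rcases lt_or_ge δ.re 1 with hlt | hge
    · exact vanishes_base (j + 1) h0 hlt hφ
    · obtain ⟨c, hc⟩ := hφ.exists_primitive
      refine vanishes_step (hφ.continuous_primitive c) (hφ.hasDeriv_primitive c)
        (locBdd_cpow_mul h0 hφ.meas hφ.bdd) (ih (δ - 1) _ ?_ ?_ hc)
      · simpa using hge
      · push_cast at h1
        simp only [Complex.sub_re, Complex.one_re]
        linarith

/-! ### The fractional part and the eigenfunction `x^δ` -/

/-- Subtracting its mean `c` from `{x}^r` leaves the oscillating factor of `x^δ {x}^r`. -/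
lemma exists_fract_pow_sub_periodicMeanZero (r : ℕ) :
    ∃ c : ℂ, PeriodicMeanZero (fun x : ℝ => ((Int.fract x : ℝ) : ℂ) ^ r - c) := by
  have hm : Measurable (fun x : ℝ => ((Int.fract x : ℝ) : ℂ) ^ r) :=
    (Complex.measurable_ofReal.comp measurable_fract).pow_const r
  have hb : ∀ x : ℝ, ‖((Int.fract x : ℝ) : ℂ) ^ r‖ ≤ 1 := fun x => by
    rw [norm_pow, Complex.norm_real, Real.norm_eq_abs, abs_of_nonneg (Int.fract_nonneg x)]
    exact pow_le_one₀ (Int.fract_nonneg x) (Int.fract_lt_one x).le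
  refine ⟨∫ t in (0:ℝ)..1, ((Int.fract t : ℝ) : ℂ) ^ r, ?_, ?_, ⟨1 + ‖_‖, fun x =>
    (norm_sub_le _ _).trans (add_le_add (hb x) le_rfl)⟩, hm.sub_const _, ?_⟩
  · intro x
    simp
  · intro x
    have h : ContinuousWithinAt (Int.fract : ℝ → ℝ) (Ioi x) x :=
      (continuousOn_fract ⌊x⌋ x ⟨Int.floor_le x, Int.lt_floor_add_one x⟩).mono_of_mem_nhdsWithin
        (Ico_mem_nhdsGT_of_mem ⟨Int.floor_le x, Int.lt_floor_add_one x⟩)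
    exact ((Complex.continuous_ofReal.continuousAt.comp_continuousWithinAt h).pow r).sub
      continuousWithinAt_const
  · have hi : IntervalIntegrable (fun x : ℝ => ((Int.fract x : ℝ) : ℂ) ^ r) volume 0 1 := by
      rw [intervalIntegrable_iff]
      exact Measure.integrableOn_of_bounded (M := 1) (by simp [uIoc])
        hm.aestronglyMeasurable (Eventually.of_forall hb)
    rw [intervalIntegral.integral_sub hi (by simp)]
    simp

/-- On `(0, ∞)`, `x^δ` is an eigenfunction of averaging with eigenvalue `1/(δ+1)`. -/
lemma cesaro_cpow {δ : ℂ} (hre : 0 ≤ δ.re) (x : ℝ) (hx : 0 < x) :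
    cesaro (fun t : ℝ => (t : ℂ) ^ δ) x = (δ + 1)⁻¹ * (x : ℂ) ^ δ := by
  have hx' : (x : ℂ) ≠ 0 := by exact_mod_cast hx.ne'
  have h1 : δ + 1 ≠ 0 := fun h => by
    have := congrArg Complex.re h
    simp at this
    linarith
  simp only [cesaro]
  rw [integral_cpow (Or.inl (by linarith)), Complex.cpow_add _ _ hx', Complex.ofReal_zero,
    Complex.zero_cpow h1, Complex.cpow_one]
  field_simp
  ring

lemma iterate_cpow {δ : ℂ} (hre : 0 ≤ δ.re) (k : ℕ) : ∀ x : ℝ, 0 < x →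
    cesaro^[k] (fun t : ℝ => (t : ℂ) ^ δ) x = ((δ + 1)⁻¹) ^ k * (x : ℂ) ^ δ := by
  induction k with
  | zero => intro x _; simp
  | succ k ih =>
    intro x hx
    have h := cesaro_cpow hre x hx
    simp only [cesaro] at h
    rw [Function.iterate_succ_apply', cesaro_congr ih x hx]
    simp only [cesaro]
    rw [intervalIntegral.integral_const_mul, mul_left_comm, h]
    ring

end

/-- For `δ ∈ ℂ` with `Re δ ≥ 0`, `δ ≠ 0`, `r : ℕ`, with
`m = ⌊Re δ⌋ + 1` and `g = P^m[x ↦ x^δ {x}^r]`, we have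
`((δ+1)/δ)·(P[g](X) − g(X)/(δ+1)) → 0` as `X → ∞`. -/
theorem cesaro_regular_poly_cpow_mul_fract_pow_tendsto_zero
    (δ : ℂ) (hre : 0 ≤ δ.re) (hδ : δ ≠ 0) (r : ℕ)
    (g : ℝ → ℂ)
    (hg : g = cesaro^[⌊δ.re⌋.toNat + 1]
      (fun x : ℝ => (x : ℂ) ^ δ * ((Int.fract x : ℝ) : ℂ) ^ r)) :
    Tendsto (fun X : ℝ => ((δ + 1) / δ) * (cesaro g X - g X / (δ + 1)))
      atTop (nhds 0) := by
  obtain ⟨c, hc⟩ := exists_fract_pow_sub_periodicMeanZero r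
  set m := ⌊δ.re⌋.toNat + 1 with hm
  have hlt : δ.re < (⌊δ.re⌋.toNat : ℝ) + 1 := by
    have h1 : ((⌊δ.re⌋.toNat : ℤ) : ℝ) = (⌊δ.re⌋ : ℝ) := by
      rw [Int.toNat_of_nonneg (Int.floor_nonneg.mpr hre)]
    rw [← Int.cast_natCast, h1]
    exact Int.lt_floor_add_one _
  have hu := vanishes_cpow_mul _ δ _ hre hlt hc
  rw [← hm] at hu
  have hv : LocBdd (fun x : ℝ => (x : ℂ) ^ δ) := by
    simpa using locBdd_cpow_mul hre (φ := fun _ => 1) measurable_const ⟨1, by simp⟩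
  set u : ℝ → ℂ := fun x => (x : ℂ) ^ δ * (((Int.fract x : ℝ) : ℂ) ^ r - c) with hu_def
  have hsplit : (fun x : ℝ => (x : ℂ) ^ δ * ((Int.fract x : ℝ) : ℂ) ^ r)
      = fun x : ℝ => u x + c * (x : ℂ) ^ δ := by
    funext x
    simp only [hu_def]
    ring
  have hit : ∀ k (x : ℝ), 0 < x → cesaro^[k]
      (fun x : ℝ => (x : ℂ) ^ δ * ((Int.fract x : ℝ) : ℂ) ^ r) x
      = cesaro^[k] u x + c * (((δ + 1)⁻¹) ^ k * (x : ℂ) ^ δ) := by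
    intro k x hx
    rw [hsplit, iterate_add_mul hu.1 hv c k x hx, iterate_cpow hre k x hx]
  -- the eigenfunction part cancels, leaving only iterated averages of the oscillating term `u`
  have hlim := ((hu.succ.2.sub (hu.2.div_const (δ + 1))).const_mul ((δ + 1) / δ))
  rw [zero_div, sub_zero, mul_zero] at hlim
  refine hlim.congr' ?_
  filter_upwards [eventually_gt_atTop 0] with X hX
  have h1 := hit (m + 1) X hX
  rw [Function.iterate_succ_apply', ← hg] at h1
  rw [h1, hg, hit m X hX]
  congr 1
  rw [pow_succ]
  ring
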